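/- The polynomial x¹⁵ + 2y¹⁵ + 4z¹⁵ + 8w¹⁵ does not lie in the ℂ-subalgebra of ℂ[x,y,z,w] generated by the fourteen polynomials xⁱ + 2yⁱ + 4zⁱ + 8wⁱ for 1 ≤ i ≤ 14. -/

import Mathlib

open MvPolynomial

/-!
The algebra is generated by homogeneous elements, so an element of it of degree `15` is a linear
combination of the products `p_μ` of power sums over the partitions `μ` of `15` without the part
`15`. Hence it is enough to find a combination of evaluations at points that kills all these `p_μ`
but not `p₁₅`. On the conic `p₁ = p₂ = 0` the only `p_μ` left are the sixteen with all parts in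
`3, …, 14`, and the conic has many points of small height over `ℤ[i]`.
Values at these points live in the base ring with a square root of `-1` adjoined.
-/

theorem adjoin_image_toSubmodule_eq_span_multiset_prod {R A ι : Type*} [CommSemiring R]
    [CommSemiring A] [Algebra R A] (p : ι → A) (S : Set ι) :
    Subalgebra.toSubmodule (Algebra.adjoin R (p '' S)) =
      Submodule.span R {a | ∃ μ : Multiset ι, (∀ i ∈ μ, i ∈ S) ∧ (μ.map p).prod = a} := by
  rw [Algebra.adjoin_eq_span]
  congr 1
  ext a
  constructor
  · intro ha
    obtain ⟨ν, hν, rfl⟩ := Submonoid.exists_multiset_of_mem_closure ha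
    choose g hgS hgp using hν
    refine ⟨ν.attach.map fun b => g b.1 b.2, ?_, ?_⟩
    · intro i hi
      obtain ⟨b, -, rfl⟩ := Multiset.mem_map.mp hi
      exact hgS b.1 b.2
    · simp only [Multiset.map_map, Function.comp_apply, hgp, Multiset.attach_map_val]
  · rintro ⟨μ, hμ, rfl⟩
    refine Submonoid.multiset_prod_mem _ _ fun b hb => ?_
    obtain ⟨i, hi, rfl⟩ := Multiset.mem_map.mp hb
    exact Submonoid.subset_closure ⟨i, hμ i hi, rfl⟩

section Graded

variable {σ R ι : Type*} [CommSemiring R] {p : ι → MvPolynomial σ R} {d : ι → ℕ}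

theorem isHomogeneous_multiset_prod {μ : Multiset ι} (hp : ∀ i ∈ μ, (p i).IsHomogeneous (d i)) :
    (μ.map p).prod.IsHomogeneous (μ.map d).sum := by
  induction μ using Multiset.induction with
  | empty => simpa using isHomogeneous_one σ R
  | cons i μ ih =>
    simp only [Multiset.map_cons, Multiset.prod_cons, Multiset.sum_cons]
    exact (hp i (Multiset.mem_cons_self i μ)).mul
      (ih fun j hj => hp j (Multiset.mem_cons_of_mem hj))

theorem mem_span_multiset_prod_of_mem_adjoin {S : Set ι} {n : ℕ} {F : MvPolynomial σ R}
    (hp : ∀ i ∈ S, (p i).IsHomogeneous (d i)) (hF : F.IsHomogeneous n)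
    (hmem : F ∈ Algebra.adjoin R (p '' S)) :
    F ∈ Submodule.span R
      {G | ∃ μ : Multiset ι, (∀ i ∈ μ, i ∈ S) ∧ (μ.map d).sum = n ∧ (μ.map p).prod = G} := by
  rw [← Subalgebra.mem_toSubmodule, adjoin_image_toSubmodule_eq_span_multiset_prod] at hmem
  have hcomp : homogeneousComponent n F = F := by
    rw [homogeneousComponent_of_mem hF, if_pos rfl]
  rw [← hcomp]
  refine Submodule.map_span_le (homogeneousComponent n) _ _ |>.mpr ?_ ⟨F, hmem, rfl⟩
  rintro _ ⟨μ, hμ, rfl⟩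
  rw [homogeneousComponent_of_mem (isHomogeneous_multiset_prod fun i hi => hp i (hμ i hi))]
  split_ifs with hsum
  · exact Submodule.subset_span ⟨μ, hμ, hsum.symm, rfl⟩
  · exact Submodule.zero_mem _

end Graded

section WeightedPsum

variable {σ A B : Type*} [Fintype σ] [CommSemiring A] [CommSemiring B]

/-- The power sum `∑ i, w i * x i ^ n` with weights `w`; at `x = MvPolynomial.X` it is the weighted
power sum polynomial. -/
def weightedPsum (w : σ → ℕ) (x : σ → A) (n : ℕ) : A :=
  ∑ i, w i * x i ^ n

theorem map_weightedPsum (f : A →+* B) (w : σ → ℕ) (x : σ → A) (n : ℕ) :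
    f (weightedPsum w x n) = weightedPsum w (f ∘ x) n := by
  simp [weightedPsum]

theorem isHomogeneous_weightedPsum_X (w : σ → ℕ) (n : ℕ) :
    (weightedPsum w (X : σ → MvPolynomial σ A) n).IsHomogeneous n := by
  refine IsHomogeneous.sum _ _ _ fun i _ => ?_
  rw [← map_natCast C]
  exact isHomogeneous_C_mul_X_pow _ _ _

end WeightedPsum

theorem weightedPsum_X_notMem_adjoin_of_separating
    {σ κ R A B : Type*} [Fintype σ] [Fintype κ] [CommSemiring R]
    [CommSemiring A] [Algebra R A] [CommSemiring B]
    {f : B →+* A} (hf : Function.Injective f) {w : σ → ℕ} {S : Set ℕ} {n : ℕ}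
    (q : κ → σ → B) (c : κ → B)
    (hprod : ∀ μ : Multiset ℕ, (∀ i ∈ μ, i ∈ S) → μ.sum = n →
      ∑ j, c j * (μ.map (weightedPsum w (q j))).prod = 0)
    (hn : ∑ j, c j * weightedPsum w (q j) n ≠ 0) :
    weightedPsum w (X : σ → MvPolynomial σ R) n ∉
      Algebra.adjoin R (weightedPsum w (X : σ → MvPolynomial σ R) '' S) := by
  intro hmem
  let L : MvPolynomial σ R →ₗ[R] A := ∑ j, f (c j) • (aeval (f ∘ q j)).toLinearMap
  have aeval_psum (j : κ) (i : ℕ) :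
      aeval (f ∘ q j) (weightedPsum w (X : σ → MvPolynomial σ R) i) =
        f (weightedPsum w (q j) i) := by
    rw [map_weightedPsum]
    simp [weightedPsum]
  have L_prod (μ : Multiset ℕ) :
      L (μ.map (weightedPsum w X)).prod =
        f (∑ j, c j * (μ.map (weightedPsum w (q j))).prod) := by
    simp only [L, LinearMap.sum_apply, LinearMap.smul_apply, AlgHom.toLinearMap_apply, smul_eq_mul,
      map_sum, map_mul, map_multiset_prod, Multiset.map_map, Function.comp_apply, aeval_psum]
  have L_psum : L (weightedPsum w X n) = f (∑ j, c j * weightedPsum w (q j) n) := by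
    simpa using L_prod {n}
  have L_psum_eq_zero : L (weightedPsum w X n) = 0 := by
    have hspan := mem_span_multiset_prod_of_mem_adjoin (d := id)
      (fun i _ => isHomogeneous_weightedPsum_X w i) (isHomogeneous_weightedPsum_X w n) hmem
    refine LinearMap.mem_ker.mp (Submodule.span_le.mpr ?_ hspan)
    rintro _ ⟨μ, hμ, hsum, rfl⟩
    rw [Multiset.map_id] at hsum
    rw [SetLike.mem_coe, LinearMap.mem_ker, L_prod, hprod μ hμ hsum, map_zero]
  exact hn (hf (by rw [map_zero, ← L_psum, L_psum_eq_zero]))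

/-- The multisets of sum `n` with parts in the list `S`, listed by multiplicity of each part.
Meant for positive parts: as `n / 0 = 0`, a part `0` would only get multiplicity `0`. -/
def multisetsWithSum : List ℕ → ℕ → List (Multiset ℕ)
  | [], n => if n = 0 then [0] else []
  | s :: S, n => (List.range (n / s + 1)).flatMap fun k =>
      (multisetsWithSum S (n - k * s)).map (Multiset.replicate k s + ·)

theorem mem_multisetsWithSum {S : List ℕ} (hS : ∀ s ∈ S, 0 < s) {μ : Multiset ℕ}
    (hμ : ∀ i ∈ μ, i ∈ S) : μ ∈ multisetsWithSum S μ.sum := by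
  induction S generalizing μ with
  | nil =>
    obtain rfl : μ = 0 := Multiset.eq_zero_of_forall_notMem fun i hi => by simpa using hμ i hi
    simp [multisetsWithSum]
  | cons s S ih =>
    set ν := μ.filter (¬s = ·)
    have hsplit : Multiset.replicate (μ.count s) s + ν = μ := by
      rw [← Multiset.filter_eq, Multiset.filter_add_not]
    have hsum : μ.count s * s + ν.sum = μ.sum := by
      simpa using congrArg Multiset.sum hsplit
    have hν : ν ∈ multisetsWithSum S ν.sum := by
      refine ih (fun t ht => hS t (List.mem_cons_of_mem s ht)) fun i hi => ?_
      obtain ⟨hiμ, hne⟩ := Multiset.mem_filter.mp hi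
      exact List.mem_of_ne_of_mem (Ne.symm hne) (hμ i hiμ)
    have hcount : μ.count s ≤ μ.sum / s := by
      rw [Nat.le_div_iff_mul_le (hS s List.mem_cons_self)]
      omega
    refine List.mem_flatMap.mpr ⟨μ.count s, List.mem_range.mpr (by omega), ?_⟩
    refine List.mem_map.mpr ⟨ν, ?_, hsplit⟩
    rwa [show μ.sum - μ.count s * s = ν.sum by omega]

section Certificate

/-- Points over `ℤ[i]` of the conic cut out by the weighted power sums of degrees `1` and `2` with
weights `1, 2, 4, 8`, by increasing height. They come from writing the hyperplane of degree `1` as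
`(-4 * (β + 2 * s), 2 * (β - 4 * s), -2 * (α - s), α + 2 * s)`, where the conic becomes
`α ^ 2 + β ^ 2 + 10 * s ^ 2 = 0`. -/
def conicPoint : Fin 24 → Fin 4 → GaussianInt := ![
  ![⟨4, 0⟩, ⟨-2, 0⟩, ⟨0, 2⟩, ⟨0, -1⟩],
  ![⟨4, 0⟩, ⟨-2, 0⟩, ⟨0, -2⟩, ⟨0, 1⟩],
  ![⟨4, 0⟩, ⟨-2, 4⟩, ⟨-2, -2⟩, ⟨1, 0⟩],
  ![⟨4, 0⟩, ⟨-2, -4⟩, ⟨-2, 2⟩, ⟨1, 0⟩],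
  ![⟨8, -4⟩, ⟨4, 2⟩, ⟨-2, -4⟩, ⟨-1, 2⟩],
  ![⟨8, 4⟩, ⟨-4, 6⟩, ⟨2, 0⟩, ⟨-1, -2⟩],
  ![⟨8, -4⟩, ⟨8, 2⟩, ⟨-2, -6⟩, ⟨-2, 3⟩],
  ![⟨8, 4⟩, ⟨8, -2⟩, ⟨-2, 6⟩, ⟨-2, -3⟩],
  ![⟨8, -4⟩, ⟨-4, -6⟩, ⟨2, 0⟩, ⟨-1, 2⟩],
  ![⟨8, 4⟩, ⟨8, -2⟩, ⟨-2, -6⟩, ⟨-2, 3⟩],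
  ![⟨8, -4⟩, ⟨8, 2⟩, ⟨-2, 6⟩, ⟨-2, -3⟩],
  ![⟨8, 4⟩, ⟨4, -2⟩, ⟨-2, 4⟩, ⟨-1, -2⟩],
  ![⟨12, 0⟩, ⟨2, -8⟩, ⟨-4, -2⟩, ⟨0, 3⟩],
  ![⟨12, 0⟩, ⟨2, 8⟩, ⟨-4, 2⟩, ⟨0, -3⟩],
  ![⟨12, 0⟩, ⟨-6, -12⟩, ⟨6, -2⟩, ⟨-3, 4⟩],
  ![⟨4, 0⟩, ⟨6, 12⟩, ⟨6, -6⟩, ⟨-5, 0⟩],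
  ![⟨4, 0⟩, ⟨6, -12⟩, ⟨6, 6⟩, ⟨-5, 0⟩],
  ![⟨12, 0⟩, ⟨-6, 12⟩, ⟨6, 2⟩, ⟨-3, -4⟩],
  ![⟨12, 8⟩, ⟨-6, 8⟩, ⟨-2, -2⟩, ⟨1, -2⟩],
  ![⟨12, 8⟩, ⟨2, 0⟩, ⟨2, -6⟩, ⟨-3, 2⟩],
  ![⟨12, -8⟩, ⟨-6, -8⟩, ⟨-2, 2⟩, ⟨1, 2⟩],
  ![⟨12, 8⟩, ⟨-6, 8⟩, ⟨2, -2⟩, ⟨-1, -2⟩],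
  ![⟨12, -8⟩, ⟨-6, -8⟩, ⟨2, 2⟩, ⟨-1, 2⟩],
  ![⟨12, 8⟩, ⟨2, -8⟩, ⟨2, -2⟩, ⟨-3, 2⟩]]

/-- Coefficients of a combination of the evaluations at `conicPoint` that kills every product of
power sums of degree `15` except the power sum itself; found as a short vector of the lattice of
integral solutions of that linear system. -/
def conicCoeff : Fin 24 → GaussianInt := ![
  ⟨54014777487153, -120413086323774⟩, ⟨216944561089005, 8006836875810⟩,
  ⟨-36843347148897, -67301559914301⟩, ⟨17261808225489, 14291021999403⟩,
  ⟨294784874197353, 231812731887756⟩, ⟨296209645150675, 183406445870360⟩,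
  ⟨-4028855611937, -7159817028494⟩, ⟨-2398680135661, -957740323388⟩,
  ⟨272531750963607, -282209177650356⟩, ⟨5212655745619, 9100799639111⟩,
  ⟨4690046934869, -551566688707⟩, ⟨221002480209677, 386272005418800⟩,
  ⟨-4990705327391, 2040255899114⟩, ⟨-1440527498059, -1676401990198⟩,
  ⟨27868095050, -58372116531⟩, ⟨105587553760, 10402143220⟩,
  ⟨76006212785, 17375340060⟩, ⟨16833313442, 101206265310⟩,
  ⟨-1634310886217, -4906543280254⟩, ⟨813108408877, -449843180332⟩,
  ⟨-4849647561990, -7031104877500⟩, ⟨932193362715, 5401431918926⟩,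
  ⟨3959256721999, 6685539896000⟩, ⟨-332654427357, 1145281238591⟩]

theorem weightedPsum_conicPoint_one : ∀ j, weightedPsum ![1, 2, 4, 8] (conicPoint j) 1 = 0 := by
  decide +kernel

theorem weightedPsum_conicPoint_two : ∀ j, weightedPsum ![1, 2, 4, 8] (conicPoint j) 2 = 0 := by
  decide +kernel

theorem sum_conicCoeff_mul_prod_of_mem_multisetsWithSum :
    ∀ μ ∈ multisetsWithSum [3, 4, 5, 6, 7, 8, 9, 10, 11, 12, 13, 14] 15,
      ∑ j, conicCoeff j * (μ.map (weightedPsum ![1, 2, 4, 8] (conicPoint j))).prod = 0 := by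
  decide +kernel

theorem sum_conicCoeff_mul_weightedPsum_ne_zero :
    ∑ j, conicCoeff j * weightedPsum ![1, 2, 4, 8] (conicPoint j) 15 ≠ 0 := by
  decide +kernel

theorem sum_conicCoeff_mul_prod_eq_zero {μ : Multiset ℕ} (hμ : ∀ i ∈ μ, 0 < i ∧ i ≠ 15)
    (hsum : μ.sum = 15) :
    ∑ j, conicCoeff j * (μ.map (weightedPsum ![1, 2, 4, 8] (conicPoint j))).prod = 0 := by
  by_cases hsmall : 1 ∈ μ ∨ 2 ∈ μ
  · refine Finset.sum_eq_zero fun j _ => mul_eq_zero_of_right _ (Multiset.prod_eq_zero ?_)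
    rcases hsmall with h | h
    · exact Multiset.mem_map.mpr ⟨1, h, weightedPsum_conicPoint_one j⟩
    · exact Multiset.mem_map.mpr ⟨2, h, weightedPsum_conicPoint_two j⟩
  · refine sum_conicCoeff_mul_prod_of_mem_multisetsWithSum μ ?_
    rw [← hsum]
    refine mem_multisetsWithSum (by decide) fun i hi => ?_
    have hle : i ≤ 15 := hsum ▸ Multiset.le_sum_of_mem hi
    obtain ⟨hpos, hne⟩ := hμ i hi
    have h1 : i ≠ 1 := by rintro rfl; exact hsmall (.inl hi)
    have h2 : i ≠ 2 := by rintro rfl; exact hsmall (.inr hi)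
    interval_cases i <;> simp_all

end Certificate

theorem exists_injective_gaussianInt_ringHom (R : Type*) [CommRing R] [CharZero R] :
    ∃ f : GaussianInt →+* QuadraticAlgebra R (-1) 0, Function.Injective f := by
  have : CharZero (QuadraticAlgebra R (-1) 0) :=
    charZero_of_injective_algebraMap QuadraticAlgebra.algebraMap_injective
  have omega_sq : (QuadraticAlgebra.omega * QuadraticAlgebra.omega : QuadraticAlgebra R (-1) 0) =
      ((-1 : ℤ) : QuadraticAlgebra R (-1) 0) := by
    simp [QuadraticAlgebra.omega_mul_omega_eq_add]
  exact ⟨Zsqrtd.lift ⟨QuadraticAlgebra.omega, omega_sq⟩,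
    Zsqrtd.lift_injective _ fun n => (neg_one_lt_zero.trans_le (mul_self_nonneg n)).ne⟩

theorem stmt_16_general {R : Type*} [CommRing R] [CharZero R] :
    (X 0 ^ 15 + 2 * X 1 ^ 15 + 4 * X 2 ^ 15 + 8 * X 3 ^ 15 : MvPolynomial (Fin 4) R) ∉
      Algebra.adjoin R
        ((fun i : ℕ =>
            (X 0 ^ i + 2 * X 1 ^ i + 4 * X 2 ^ i + 8 * X 3 ^ i : MvPolynomial (Fin 4) R)) ''
          {i | 0 < i ∧ i ≠ 15}) := by
  obtain ⟨f, hf⟩ := exists_injective_gaussianInt_ringHom R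
  have hnot := weightedPsum_X_notMem_adjoin_of_separating (R := R) (S := {i | 0 < i ∧ i ≠ 15}) hf
    conicPoint conicCoeff (fun _ => sum_conicCoeff_mul_prod_eq_zero)
    sum_conicCoeff_mul_weightedPsum_ne_zero
  have weightedPsum_eq : weightedPsum ![1, 2, 4, 8] (X : Fin 4 → MvPolynomial (Fin 4) R) =
      fun i => X 0 ^ i + 2 * X 1 ^ i + 4 * X 2 ^ i + 8 * X 3 ^ i := by
    funext i
    simp [weightedPsum, Fin.sum_univ_four]
  rwa [weightedPsum_eq] at hnot

/-- The polynomial `x¹⁵ + 2y¹⁵ + 4z¹⁵ + 8w¹⁵` does not lie in the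
`ℂ`-subalgebra of `ℂ[x,y,z,w]` generated by the fourteen polynomials
`xⁱ + 2yⁱ + 4zⁱ + 8wⁱ`, `1 ≤ i ≤ 14`. -/
theorem stmt_16 :
    (X 0 ^ 15 + 2 * X 1 ^ 15 + 4 * X 2 ^ 15 + 8 * X 3 ^ 15 : MvPolynomial (Fin 4) ℂ) ∉
      Algebra.adjoin ℂ
        ((fun i : ℕ =>
            (X 0 ^ i + 2 * X 1 ^ i + 4 * X 2 ^ i + 8 * X 3 ^ i : MvPolynomial (Fin 4) ℂ)) ''
          Set.Icc 1 14) := by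
  have hsub : Set.Icc 1 14 ⊆ {i : ℕ | 0 < i ∧ i ≠ 15} := fun i ⟨hpos, hle⟩ => ⟨hpos, by omega⟩
  exact fun hmem => stmt_16_general (Algebra.adjoin_mono (Set.image_mono hsub) hmem)
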